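/- For every integer r ≥ 2 and every real ε > 0 there exist constants C and n₀ such that for all integers n ≥ n₀ and all integers d with C·log n ≤ d ≤ n/2, there exists an (r+1)-graph H on n vertices whose maximum r-degree is at most (1+ε)·d and which satisfies α(H) ≤ (1+ε)·((r+1)!)^{1/r}·((n/d)·log n)^{1/r}. -/

import Mathlib

open Finset
open scoped Classical

/-- `Z` is an independent set of the hypergraph `H`: it contains no edge. -/
def IsIndep {V : Type*} [DecidableEq V] (H : Finset (Finset V)) (Z : Finset V) : Prop :=
  ∀ e ∈ H, ¬ e ⊆ Z

/-- The independence number of a hypergraph on a finite vertex type. -/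
noncomputable def indepNum {V : Type*} [Fintype V] [DecidableEq V]
    (H : Finset (Finset V)) : ℕ :=
  ((Finset.univ : Finset V).powerset.filter (fun Z => IsIndep H Z)).sup Finset.card

/-- `H` has maximum `r`-degree at most `d`: every `r`-element vertex set is
contained in at most `d` edges. -/
def maxDegLe {V : Type*} [DecidableEq V] (r : ℕ) (H : Finset (Finset V)) (d : ℕ) : Prop :=
  ∀ S : Finset V, S.card = r → (H.filter (fun e => S ⊆ e)).card ≤ d

/-!
Put each `(r + 1)`-set into `H` independently with probability `p = d / n`. The degree of an `r`-set
is binomial with mean at most `d`, so by Chernoff it reaches `(1 + ε) d` with probability at most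
`exp (-c d)`, where `c = (1 + ε) log (1 + ε) - ε > 0`; once `d ≥ (r + 1) / c * log n` this beats the
`n ^ r` choices of the `r`-set. A `k`-set is independent with probability at most
`exp (-p * k.choose (r + 1))`. The scale `M` of the claimed bound solves
`p * M ^ r = (r + 1)! * log n`, so for `k ≥ (1 + ε) M` the exponent exceeds `(k + 1) log n`, which
beats the `n ^ k` choices of the `k`-set.
-/

section RandomSubset

open MeasureTheory ProbabilityTheory InformationTheory unitInterval

variable {α : Type*} [Countable α] {u A : Finset α} {p : I}

theorem setBernoulli_restrict_powerset (u : Finset α) (p : I) :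
    setBer((u : Set α), p).restrict (u.powerset.map coeEmb.toEmbedding : Finset (Set α)) =
      setBer((u : Set α), p) := by
  refine Measure.restrict_eq_self_of_ae_mem ?_
  filter_upwards [setBernoulli_ae_subset] with s hs
  lift s to Finset α using u.finite_toSet.subset hs
  simpa using hs

theorem integrable_setBernoulli {F : Type*} [NormedAddCommGroup F] (u : Finset α) (p : I)
    (f : Set α → F) : Integrable f setBer((u : Set α), p) := by
  rw [← setBernoulli_restrict_powerset]
  exact IntegrableOn.finset

theorem integral_setBernoulli [DecidableEq α] {F : Type*} [NormedAddCommGroup F] [NormedSpace ℝ F]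
    [CompleteSpace F] (u : Finset α) (p : I) (f : Set α → F) :
    ∫ s, f s ∂setBer((u : Set α), p) =
      ∑ s ∈ u.powerset, ((p : ℝ) ^ #s * (1 - p) ^ #(u \ s)) • f s := by
  rw [← setBernoulli_restrict_powerset, setIntegral_finset _ IntegrableOn.finset, sum_map]
  refine sum_congr rfl fun s hs ↦ ?_
  have hsu : (s : Set α) ⊆ u := coe_subset.2 (mem_powerset.1 hs)
  change setBer((u : Set α), p).real {(s : Set α)} • f s = _
  rw [setBernoulli_real_singleton p hsu u.finite_toSet, ← coe_sdiff, Set.ncard_coe_finset,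
    Set.ncard_coe_finset]

theorem integral_pow_ncard_inter_setBernoulli (hA : A ⊆ u) (p : I) (t : ℝ) :
    ∫ s : Set α, t ^ (s ∩ A).ncard ∂setBer((u : Set α), p) = (1 - p + p * t) ^ #A := by
  let f : α → ℝ := fun e ↦ p * if e ∈ A then t else 1
  calc
    _ = ∑ s ∈ u.powerset, (∏ e ∈ s, f e) * ∏ _e ∈ u \ s, (1 - p : ℝ) := by
      rw [integral_setBernoulli]
      refine sum_congr rfl fun s _ ↦ ?_
      rw [← coe_inter, Set.ncard_coe_finset, prod_mul_distrib, prod_const, prod_const, prod_ite,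
        prod_const, prod_const_one, mul_one, filter_mem_eq_inter, smul_eq_mul]
      ring
    _ = ∏ e ∈ u, (f e + (1 - p)) := (prod_add f _ u).symm
    _ = ∏ e ∈ A, (f e + (1 - p)) := by
      refine (prod_subset hA fun e _ he ↦ ?_).symm
      simp [f, he]
    _ = (1 - p + p * t) ^ #A :=
      prod_eq_pow_card fun e he ↦ by simp only [f, he, if_true]; ring

theorem mgf_ncard_inter_setBernoulli (hA : A ⊆ u) (p : I) (t : ℝ) :
    mgf (fun s : Set α ↦ ((s ∩ A).ncard : ℝ)) setBer((u : Set α), p) t =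
      (1 - p + p * Real.exp t) ^ #A := by
  simp only [mgf, mul_comm t, Real.exp_nat_mul, integral_pow_ncard_inter_setBernoulli hA]

theorem setBernoulli_real_mul_le_ncard_inter_le_exp {x m : ℝ} (hA : A ⊆ u) (hx : 1 ≤ x)
    (hm : (p : ℝ) * #A ≤ m) :
    setBer((u : Set α), p).real {s | x * m ≤ (s ∩ A).ncard} ≤ Real.exp (-(klFun x * m)) := by
  have hmgf : mgf (fun s : Set α ↦ ((s ∩ A).ncard : ℝ)) setBer((u : Set α), p) (Real.log x) =
      (1 - p + p * x) ^ #A := by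
    rw [mgf_ncard_inter_setBernoulli hA, Real.exp_log (by linarith)]
  have hpx : 0 ≤ p * (x - 1) := mul_nonneg p.2.1 (by linarith)
  calc
    _ ≤ Real.exp (-Real.log x * (x * m)) * (1 - p + p * x) ^ #A :=
      hmgf ▸ measure_ge_le_exp_mul_mgf _ (Real.log_nonneg hx) (integrable_setBernoulli ..)
    _ ≤ Real.exp (-Real.log x * (x * m)) * Real.exp (p * (x - 1)) ^ #A := by
      gcongr
      · linarith
      · linarith [Real.add_one_le_exp (p * (x - 1))]
    _ = Real.exp (-(x * Real.log x * m) + (x - 1) * (p * #A)) := by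
      rw [← Real.exp_nat_mul, ← Real.exp_add]
      ring_nf
    _ ≤ Real.exp (-(x * Real.log x * m) + (x - 1) * m) := by
      gcongr
    _ = Real.exp (-(klFun x * m)) := by
      rw [klFun_apply]
      ring_nf

theorem setBernoulli_real_disjoint_le_exp (hA : A ⊆ u) (p : I) :
    setBer((u : Set α), p).real {s | Disjoint s ↑A} ≤ Real.exp (-(p * #A)) := by
  -- `0 ^ |s ∩ A|` is the indicator of disjointness, so evaluate the generating function at `t = 0`.
  calc
    _ ≤ setBer((u : Set α), p).real {s | (1 : ℝ) ≤ 0 ^ (s ∩ A).ncard} := by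
      refine measureReal_mono fun s hs ↦ ?_
      simp [Set.disjoint_iff_inter_eq_empty.1 hs]
    _ ≤ ∫ s : Set α, (0 : ℝ) ^ (s ∩ A).ncard ∂setBer((u : Set α), p) := by
      simpa only [one_mul] using mul_meas_ge_le_integral_of_nonneg
        (.of_forall fun _ ↦ by positivity) (integrable_setBernoulli u p _) 1
    _ = (1 - p : ℝ) ^ #A := by
      rw [integral_pow_ncard_inter_setBernoulli hA, mul_zero, add_zero]
    _ ≤ Real.exp (-p) ^ #A := by
      gcongr
      · linarith [p.2.2]
      · exact Real.one_sub_le_exp_neg p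
    _ = Real.exp (-(p * #A)) := by
      rw [← Real.exp_nat_mul]
      ring_nf

theorem exists_subset_notMem_of_setBernoulli_real_lt_one {B : Set (Set α)}
    (hB : setBer((u : Set α), p).real B < 1) : ∃ s ⊆ u, (s : Set α) ∉ B := by
  by_contra! h
  have hae : B =ᵐ[setBer((u : Set α), p)] Set.univ := by
    refine Filter.eventuallyEq_univ.2 ?_
    filter_upwards [setBernoulli_ae_subset] with s hs
    lift s to Finset α using u.finite_toSet.subset hs
    exact h s (coe_subset.1 hs)
  rw [measureReal_congr hae, probReal_univ] at hB
  exact hB.false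

theorem exists_subset_card_inter_lt_not_disjoint [DecidableEq α] {ι κ : Type*}
    {𝒮 : Finset ι} {𝒵 : Finset κ} {B : ι → Finset α} {A : κ → Finset α} {x m a : ℝ} (hx : 1 ≤ x)
    (hBu : ∀ S ∈ 𝒮, B S ⊆ u) (hB : ∀ S ∈ 𝒮, (p : ℝ) * #(B S) ≤ m)
    (hAu : ∀ Z ∈ 𝒵, A Z ⊆ u) (hA : ∀ Z ∈ 𝒵, a ≤ p * #(A Z))
    (hsum : #𝒮 * Real.exp (-(klFun x * m)) + #𝒵 * Real.exp (-a) < 1) :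
    ∃ H ⊆ u, (∀ S ∈ 𝒮, (#(H ∩ B S) : ℝ) < x * m) ∧ ∀ Z ∈ 𝒵, ¬Disjoint H (A Z) := by
  let heavy (S : ι) : Set (Set α) := {H | x * m ≤ (H ∩ B S).ncard}
  let avoiding (Z : κ) : Set (Set α) := {H | Disjoint H ↑(A Z)}
  let μ := setBer((u : Set α), p)
  have hheavy : μ.real (⋃ S ∈ 𝒮, heavy S) ≤ #𝒮 * Real.exp (-(klFun x * m)) := by
    rw [← nsmul_eq_mul]
    exact (measureReal_biUnion_finset_le _ _).trans <| sum_le_card_nsmul _ _ _ fun S hS ↦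
      setBernoulli_real_mul_le_ncard_inter_le_exp (hBu S hS) hx (hB S hS)
  have havoiding : μ.real (⋃ Z ∈ 𝒵, avoiding Z) ≤ #𝒵 * Real.exp (-a) := by
    rw [← nsmul_eq_mul]
    exact (measureReal_biUnion_finset_le _ _).trans <| sum_le_card_nsmul _ _ _ fun Z hZ ↦
      (setBernoulli_real_disjoint_le_exp (hAu Z hZ) p).trans
        (Real.exp_le_exp.2 (neg_le_neg (hA Z hZ)))
  obtain ⟨H, hHu, hH⟩ := exists_subset_notMem_of_setBernoulli_real_lt_one <|
    (measureReal_union_le _ _).trans_lt ((add_le_add hheavy havoiding).trans_lt hsum)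
  simp only [heavy, avoiding, Set.mem_union, Set.mem_iUnion, Set.mem_ofPred_eq, not_or, not_exists,
    not_le, disjoint_coe, ← coe_inter, Set.ncard_coe_finset] at hH
  exact ⟨H, hHu, hH.1, hH.2⟩

end RandomSubset

section Hypergraph

open InformationTheory unitInterval

variable {V : Type*} [Fintype V] [DecidableEq V] {r k : ℕ}

theorem card_filter_powersetCard_superset_le (S : Finset V) :
    #{e ∈ univ.powersetCard (#S + 1) | S ⊆ e} ≤ Fintype.card V := by
  have hsub : ({e ∈ univ.powersetCard (#S + 1) | S ⊆ e} : Finset (Finset V)) ⊆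
      univ.image (insert · S) := by
    intro e he
    rw [mem_filter, mem_powersetCard_univ] at he
    obtain ⟨v, -, rfl⟩ := exists_eq_insert_iff.2 ⟨he.2, he.1.symm⟩
    exact mem_image_of_mem _ (mem_univ v)
  exact (card_le_card hsub).trans card_image_le

theorem indepNum_lt_of_forall_not_isIndep {H : Finset (Finset V)} (hk : 0 < k)
    (h : ∀ Z : Finset V, #Z = k → ¬IsIndep H Z) : indepNum H < k := by
  refine (Finset.sup_lt_iff hk).2 fun Z hZ ↦ ?_
  by_contra! hkZ
  obtain ⟨Y, hYZ, hY⟩ := exists_subset_card_eq hkZ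
  exact h Y hY fun e he heY ↦ (mem_filter.1 hZ).2 e he (heY.trans hYZ)

theorem exists_uniform_degree_lt_not_isIndep {p : I} {x : ℝ} (hx : 1 ≤ x)
    (h : (Fintype.card V).choose r * Real.exp (-(klFun x * (p * Fintype.card V))) +
      (Fintype.card V).choose k * Real.exp (-(p * k.choose (r + 1))) < 1) :
    ∃ H : Finset (Finset V), (∀ e ∈ H, #e = r + 1) ∧
      (∀ S : Finset V, #S = r → (#{e ∈ H | S ⊆ e} : ℝ) < x * (p * Fintype.card V)) ∧
      ∀ Z : Finset V, #Z = k → ¬IsIndep H Z := by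
  obtain ⟨H, hHu, hdeg, hZ⟩ := exists_subset_card_inter_lt_not_disjoint
    (u := univ.powersetCard (r + 1)) (p := p) (m := p * Fintype.card V)
    (a := p * k.choose (r + 1)) (𝒮 := univ.powersetCard r) (𝒵 := univ.powersetCard k)
    (B := fun S : Finset V ↦ {e ∈ univ.powersetCard (r + 1) | S ⊆ e})
    (A := fun Z : Finset V ↦ Z.powersetCard (r + 1)) hx
    (fun S _ ↦ filter_subset _ _)
    (fun S hS ↦ by
      obtain rfl := mem_powersetCard_univ.1 hS
      exact mul_le_mul_of_nonneg_left
        (Nat.cast_le.2 (card_filter_powersetCard_superset_le S)) p.2.1)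
    (fun Z _ ↦ powersetCard_mono (subset_univ Z))
    (fun Z hZ ↦ by rw [card_powersetCard, mem_powersetCard_univ.1 hZ])
    (by simpa only [card_powersetCard, card_univ] using h)
  refine ⟨H, fun e he ↦ mem_powersetCard_univ.1 (hHu he), fun S hS ↦ ?_, fun Z hZk hindep ↦ ?_⟩
  · simpa only [inter_filter, inter_eq_left.2 hHu] using hdeg S (mem_powersetCard_univ.2 hS)
  · obtain ⟨e, heH, heZ⟩ := not_disjoint_iff.1 (hZ Z (mem_powersetCard_univ.2 hZk))
    exact hindep e heH (mem_powersetCard.1 heZ).1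

theorem choose_mul_exp_neg_le_inv {n m : ℕ} {y : ℝ} (hn : n ≠ 0)
    (hy : (m + 1) * Real.log n ≤ y) : n.choose m * Real.exp (-y) ≤ (n : ℝ)⁻¹ := by
  have hn' : (0 : ℝ) < n := by positivity
  calc
    _ ≤ (n : ℝ) ^ m * Real.exp (-((m + 1 : ℕ) * Real.log n)) := by
      push_cast
      gcongr
      exact_mod_cast Nat.choose_le_pow n m
    _ = (n : ℝ)⁻¹ := by
      rw [Real.exp_neg, Real.exp_nat_mul, Real.exp_log hn', pow_succ]
      field_simp

theorem exists_uniform_degree_le_not_isIndep {d x : ℝ} (hn : 2 < Fintype.card V) (hd : 0 ≤ d)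
    (hdn : d ≤ Fintype.card V) (hx : 1 ≤ x)
    (hdeg : (r + 1) * Real.log (Fintype.card V) ≤ klFun x * d)
    (hindep : (k + 1) * Real.log (Fintype.card V) ≤ d / Fintype.card V * k.choose (r + 1)) :
    ∃ H : Finset (Finset V), (∀ e ∈ H, #e = r + 1) ∧
      (∀ S : Finset V, #S = r → (#{e ∈ H | S ⊆ e} : ℝ) ≤ x * d) ∧
      ∀ Z : Finset V, #Z = k → ¬IsIndep H Z := by
  have hn' : (2 : ℝ) < Fintype.card V := mod_cast hn
  let p : I := ⟨d / Fintype.card V, by positivity, div_le_one_of_le₀ hdn (by positivity)⟩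
  have hpd : (p : ℝ) * Fintype.card V = d := div_mul_cancel₀ d (by positivity)
  have hsum : (Fintype.card V).choose r * Real.exp (-(klFun x * (p * Fintype.card V))) +
      (Fintype.card V).choose k * Real.exp (-(p * k.choose (r + 1))) < 1 := by
    have hinv : (Fintype.card V : ℝ)⁻¹ < 2⁻¹ := inv_strictAnti₀ two_pos hn'
    rw [hpd]
    linarith [choose_mul_exp_neg_le_inv (by omega) hdeg,
      choose_mul_exp_neg_le_inv (by omega) hindep]
  obtain ⟨H, hunif, hlt, hZ⟩ := exists_uniform_degree_lt_not_isIndep hx hsum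
  exact ⟨H, hunif, fun S hS ↦ (hlt S hS).le.trans_eq (by rw [hpd]), hZ⟩

end Hypergraph

section Asymptotics

open Filter InformationTheory

/-- The scale `M` of the independence number of the random `(r + 1)`-graph on `n` vertices with edge
probability `d / n`: the solution of `d / n * M ^ r = (r + 1)! * log n`. The root is written as a
product of two roots. -/
noncomputable def indepScale (r : ℕ) (n d : ℝ) : ℝ :=
  (Nat.factorial (r + 1) : ℝ) ^ ((1 : ℝ) / r) * ((n / d) * Real.log n) ^ ((1 : ℝ) / r)

variable {r : ℕ} {n d ε : ℝ}

theorem indepScale_nonneg (hn : 1 ≤ n) (hd : 0 ≤ d) : 0 ≤ indepScale r n d := by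
  have hlog := Real.log_nonneg hn
  unfold indepScale
  positivity

theorem indepScale_pow (hr : r ≠ 0) (hn : 1 ≤ n) (hd : 0 ≤ d) :
    indepScale r n d ^ r = Nat.factorial (r + 1) * (n / d * Real.log n) := by
  have hlog := Real.log_nonneg hn
  rw [indepScale, mul_pow, one_div, Real.rpow_inv_natCast_pow (by positivity) hr,
    Real.rpow_inv_natCast_pow (by positivity) hr]

theorem log_rpow_le_indepScale (hn : 1 ≤ n) (hd : 0 < d) (hdn : d ≤ n) :
    Real.log n ^ ((1 : ℝ) / r) ≤ indepScale r n d := by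
  have hlog := Real.log_nonneg hn
  have hfact : (1 : ℝ) ≤ (Nat.factorial (r + 1) : ℝ) ^ ((1 : ℝ) / r) :=
    Real.one_le_rpow (mod_cast Nat.factorial_pos _) (by positivity)
  have hratio : Real.log n ≤ n / d * Real.log n :=
    le_mul_of_one_le_left hlog ((one_le_div hd).2 hdn)
  calc
    _ ≤ (n / d * Real.log n) ^ ((1 : ℝ) / r) := by gcongr
    _ ≤ _ := le_mul_of_one_le_left (by positivity) hfact

theorem eventually_succ_mul_pow_le_descFactorial (hr : r ≠ 0) (hε : 0 < ε) :
    ∀ᶠ M : ℝ in atTop, ∀ k : ℕ, (1 + ε) * M ≤ k →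
      (k + 1) * M ^ r ≤ k.descFactorial (r + 1) := by
  filter_upwards [eventually_gt_atTop 0, (tendsto_id.atTop_mul_const
    (half_pos hε)).eventually_ge_atTop (1 + r + r * (ε / 2))] with M hM hMr k hk
  simp only [id] at hMr
  have hrε : 0 ≤ r * (ε / 2) := by positivity
  have hbase : (1 + ε / 2) * M ≤ k - r := by linarith
  have hkr0 : 0 ≤ (k : ℝ) - r := le_trans (by positivity) hbase
  have hkr : r ≤ k := by exact_mod_cast sub_nonneg.1 hkr0
  have hM_le : M ≤ k - r := le_trans (le_mul_of_one_le_left hM.le (by linarith)) hbase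
  have hsucc : (k : ℝ) + 1 ≤ (1 + ε / 2) * (k - r) := by
    linarith [mul_le_mul_of_nonneg_right hM_le (half_pos hε).le]
  calc
    (k + 1) * M ^ r ≤ (1 + ε / 2) * (k - r) * M ^ r := by gcongr
    _ = (k - r) * ((1 + ε / 2) * M ^ r) := by ring
    _ ≤ (k - r) * ((1 + ε / 2) ^ r * M ^ r) := by
      gcongr
      exact le_self_pow₀ (by linarith) hr
    _ = (k - r) * ((1 + ε / 2) * M) ^ r := by rw [mul_pow]
    _ ≤ (k - r) * (k - r) ^ r := by gcongr
    _ = ((k + 1 - (r + 1) : ℕ) : ℝ) ^ (r + 1) := by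
      rw [Nat.add_sub_add_right, Nat.cast_sub hkr, pow_succ']
    _ ≤ k.descFactorial (r + 1) := mod_cast Nat.pow_sub_le_descFactorial k (r + 1)

theorem eventually_succ_mul_log_le_div_mul_choose (hr : r ≠ 0) (hε : 0 < ε) :
    ∀ᶠ n : ℕ in atTop, ∀ d : ℝ, 0 < d → d ≤ n → ∀ k : ℕ, (1 + ε) * indepScale r n d ≤ k →
      (k + 1) * Real.log n ≤ d / n * k.choose (r + 1) := by
  have hlog : Tendsto (fun n : ℕ ↦ Real.log n ^ ((1 : ℝ) / r)) atTop atTop :=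
    (tendsto_rpow_atTop (by positivity)).comp
      (Real.tendsto_log_atTop.comp tendsto_natCast_atTop_atTop)
  have hdescFactorial := eventually_forall_ge_atTop.2
    (eventually_succ_mul_pow_le_descFactorial hr hε)
  filter_upwards [eventually_ge_atTop 1, hlog.eventually hdescFactorial] with n hn hM d hd hdn k hk
  have hn' : (1 : ℝ) ≤ n := mod_cast hn
  have hdesc := hM _ (log_rpow_le_indepScale hn' hd hdn) k hk
  rw [indepScale_pow hr hn' hd.le, Nat.descFactorial_eq_factorial_mul_choose] at hdesc
  push_cast at hdesc
  have hfact : (0 : ℝ) < Nat.factorial (r + 1) := by positivity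
  have hdesc' : (k + 1) * (n / d * Real.log n) ≤ k.choose (r + 1) :=
    le_of_mul_le_mul_left (by linarith) hfact
  calc
    (k + 1) * Real.log n = d / n * ((k + 1) * (n / d * Real.log n)) := by field_simp
    _ ≤ _ := by gcongr

theorem klFun_pos_of_one_lt {x : ℝ} (hx : 1 < x) : 0 < klFun x :=
  (klFun_nonneg (by linarith)).lt_of_ne' fun h ↦ hx.ne' ((klFun_eq_zero_iff (by linarith)).1 h)

theorem stmt6_general (r : ℕ) (hr : r ≠ 0) (ε : ℝ) (hε : 0 < ε) :
    ∃ C : ℝ, ∃ n₀ : ℕ, ∀ (V : Type*) [Fintype V] [DecidableEq V], n₀ ≤ Fintype.card V →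
      ∀ d : ℝ, C * Real.log (Fintype.card V) ≤ d → d ≤ Fintype.card V →
      ∃ H : Finset (Finset V),
        (∀ e ∈ H, #e = r + 1) ∧
        (∀ S : Finset V, #S = r → (#{e ∈ H | S ⊆ e} : ℝ) ≤ (1 + ε) * d) ∧
        (indepNum H : ℝ) ≤ (1 + ε) * indepScale r (Fintype.card V) d := by
  have hkl : 0 < klFun (1 + ε) := klFun_pos_of_one_lt (by linarith)
  obtain ⟨n₀, hn₀⟩ := eventually_atTop.1
    ((eventually_succ_mul_log_le_div_mul_choose hr hε).and (eventually_gt_atTop 2))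
  refine ⟨(r + 1) / klFun (1 + ε), n₀, fun V _ _ hV d hCd hdn ↦ ?_⟩
  obtain ⟨hchoose, hn⟩ := hn₀ _ hV
  have hn1 : (1 : ℝ) < Fintype.card V := mod_cast one_lt_two.trans hn
  have hlog := Real.log_pos hn1
  have hd : 0 < d := lt_of_lt_of_le (by positivity) hCd
  have hdeg : (r + 1) * Real.log (Fintype.card V) ≤ klFun (1 + ε) * d := by
    rwa [div_mul_eq_mul_div, div_le_iff₀' hkl] at hCd
  set B : ℝ := (1 + ε) * indepScale r (Fintype.card V) d
  obtain ⟨H, hunif, hdegree, hindep⟩ := exists_uniform_degree_le_not_isIndep hn hd.le hdn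
    (by linarith) hdeg (hchoose d hd hdn (⌊B⌋₊ + 1) (mod_cast (Nat.lt_floor_add_one B).le))
  refine ⟨H, hunif, hdegree, ?_⟩
  have hB : 0 ≤ B := mul_nonneg (by linarith) (indepScale_nonneg hn1.le hd.le)
  exact (Nat.le_floor_iff hB).1
    (Nat.lt_succ_iff.1 (indepNum_lt_of_forall_not_isIndep (Nat.succ_pos _) hindep))

end Asymptotics

/-- For every `r ≥ 2` and `ε > 0` there exist `C` and `n₀` such that for all
`n ≥ n₀` and integers `d` with `C·log n ≤ d ≤ n/2` there is an `(r+1)`-graph on `n`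
vertices with maximum `r`-degree at most `(1+ε)·d` and
`α(H) ≤ (1+ε)·((r+1)!)^(1/r)·((n/d)·log n)^(1/r)`. -/
theorem stmt6 (r : ℕ) (hr : 2 ≤ r) (ε : ℝ) (hε : 0 < ε) :
    ∃ C : ℝ, ∃ n₀ : ℕ, ∀ n : ℕ, n₀ ≤ n → ∀ d : ℕ,
      C * Real.log n ≤ (d : ℝ) → (d : ℝ) ≤ (n : ℝ) / 2 →
      ∃ H : Finset (Finset (Fin n)),
        (∀ e ∈ H, e.card = r + 1) ∧
        (∀ S : Finset (Fin n), S.card = r →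
          ((H.filter (fun e => S ⊆ e)).card : ℝ) ≤ (1 + ε) * d) ∧
        (indepNum H : ℝ) ≤ (1 + ε) * (Nat.factorial (r + 1) : ℝ) ^ ((1 : ℝ) / r) *
          (((n : ℝ) / d) * Real.log n) ^ ((1 : ℝ) / r) := by
  obtain ⟨C, n₀, h⟩ := stmt6_general r (by omega) ε hε
  refine ⟨C, n₀, fun n hn d hC hd ↦ ?_⟩
  have hdn : (d : ℝ) ≤ n := by linarith [Nat.cast_nonneg (α := ℝ) n]
  simpa only [indepScale, mul_assoc, Fintype.card_fin] using
    h (Fin n) (by rwa [Fintype.card_fin]) d (by rwa [Fintype.card_fin]) (by rwa [Fintype.card_fin])
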